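/- Let G be an edge-weighted graph, ρ > 0 a real, and suppose G has a tree decomposition in which every bag has size at most k. Then there exist a partition 𝒫 of V(G) into parts of weak diameter at most ρ and a total order ⪯ on 𝒫 such that for every real r > ρ, wcol_r(G,𝒫,⪯) ≤ min( k · 2^k · C(k+⌈2r/ρ⌉, k), (2⌈2r/ρ⌉+k+1)^(3⌈2r/ρ⌉+4) ), where C(·,·) denotes the binomial coefficient. -/

import Mathlib

open scoped ENNReal

namespace ScatterDim

variable {V : Type}





/-- Total weight of a walk in an edge-weighted graph. -/
noncomputable def walkWeight {G : SimpleGraph V} (w : Sym2 V → ℝ≥0∞)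
    {u v : V} (p : G.Walk u v) : ℝ≥0∞ :=
  (p.edges.map w).sum

/-- Shortest-path metric of an edge-weighted graph: the infimum of the total
weights of walks between the two vertices. -/
noncomputable def gdist (G : SimpleGraph V) (w : Sym2 V → ℝ≥0∞) (u v : V) : ℝ≥0∞ :=
  ⨅ p : G.Walk u v, walkWeight w p

/-- Shortest-path distance measured within the subgraph induced on `S`
(`⊤` if one of the endpoints is not in `S`). -/
noncomputable def distOn (G : SimpleGraph V) (w : Sym2 V → ℝ≥0∞) (S : Set V)
    (u v : V) : ℝ≥0∞ :=
  ⨅ (hu : u ∈ S), ⨅ (hv : v ∈ S), ⨅ (p : (G.induce S).Walk ⟨u, hu⟩ ⟨v, hv⟩),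
    (p.edges.map (fun e => w (e.map Subtype.val))).sum

/-- Distance between two sets of vertices inside the subgraph induced on `S`. -/
noncomputable def setDistOn (G : SimpleGraph V) (w : Sym2 V → ℝ≥0∞) (S : Set V)
    (A B : Set V) : ℝ≥0∞ :=
  ⨅ a ∈ A, ⨅ b ∈ B, distOn G w S a b

/-- Distance from a point to a set. -/
noncomputable def pdist (G : SimpleGraph V) (w : Sym2 V → ℝ≥0∞) (u : V) (X : Set V) : ℝ≥0∞ :=
  ⨅ x ∈ X, gdist G w u x

/-- `Y` is weakly `r`-reachable from `X` (with respect to the partition `P`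
ordered by `le`): there is a path of total weight at most `r` from a vertex of `X`
to a vertex of `Y` in the subgraph induced on the union of the parts `Z` with `Y ⪯ Z`. -/
def WReach (G : SimpleGraph V) (w : Sym2 V → ℝ≥0∞) (P : Set (Set V))
    (le : Set V → Set V → Prop) (r : ℝ) (X Y : Set V) : Prop :=
  setDistOn G w (⋃₀ {Z | Z ∈ P ∧ le Y Z}) X Y ≤ ENNReal.ofReal r

/-- The weak coloring number of `G` with respect to the partition `P`
and the order `le`: the maximum over `X ∈ P` of the number of parts weakly
`r`-reachable from `X`. -/
noncomputable def wcol (G : SimpleGraph V) (w : Sym2 V → ℝ≥0∞) (P : Set (Set V))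
    (le : Set V → Set V → Prop) (r : ℝ) : ℕ :=
  ⨆ X ∈ P, {Y | Y ∈ P ∧ WReach G w P le r X Y}.ncard

/-- `le` is a total (linear) order on the collection `P`. -/
def IsLinearOrderOn {α : Type} (P : Set α) (le : α → α → Prop) : Prop :=
  (∀ X ∈ P, le X X) ∧
  (∀ X ∈ P, ∀ Y ∈ P, le X Y → le Y X → X = Y) ∧
  (∀ X ∈ P, ∀ Y ∈ P, ∀ Z ∈ P, le X Y → le Y Z → le X Z) ∧
  (∀ X ∈ P, ∀ Y ∈ P, le X Y ∨ le Y X)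

/-- An `ε`-ladder of width `r` and length `ℓ` in the metric `dist`. -/
def IsLadder (dist : V → V → ℝ≥0∞) (ε r : ℝ) (ℓ : ℕ) (x p : Fin ℓ → V) : Prop :=
  (∀ i j : Fin ℓ, j < i → dist (p j) (x i) ≤ ENNReal.ofReal r) ∧
  (∀ i : Fin ℓ, ENNReal.ofReal ((1 + ε) * r) < dist (p i) (x i))

/-- `G` contains the complete graph on `h` vertices as a minor, witnessed by
pairwise disjoint connected nonempty branch sets that are pairwise adjacent. -/
def HasCompleteMinor (G : SimpleGraph V) (h : ℕ) : Prop :=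
  ∃ B : Fin h → Set V,
    (∀ i, (G.induce (B i)).Connected) ∧
    (∀ i j, i ≠ j → Disjoint (B i) (B j)) ∧
    (∀ i j, i ≠ j → ∃ u ∈ B i, ∃ v ∈ B j, G.Adj u v)

/-- `(T, bag)` is a tree decomposition of `G`. -/
def IsTreeDecompOf {ι : Type} (G : SimpleGraph V) (T : SimpleGraph ι) (bag : ι → Set V) : Prop :=
  T.IsTree ∧
  (∀ u v : V, G.Adj u v → ∃ t, u ∈ bag t ∧ v ∈ bag t) ∧
  (∀ v : V, (T.induce {t | v ∈ bag t}).Connected)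

/-- `G` has treewidth at most `n`. -/
def TreewidthAtMost (G : SimpleGraph V) (n : ℕ) : Prop :=
  ∃ (ι : Type) (T : SimpleGraph ι) (bag : ι → Set V),
    IsTreeDecompOf G T bag ∧ ∀ t, (bag t).ncard ≤ n + 1

/-- `D` is an `r`-cover of the edge-weighted graph `(G, w)`. -/
def IsCover (G : SimpleGraph V) (w : Sym2 V → ℝ≥0∞) (r : ℝ) (D : Set (Set V)) : Prop :=
  ∀ v : V, ∃ A ∈ D, ∀ u : V, gdist G w v u ≤ ENNReal.ofReal r → u ∈ A


/-!
Root the tree of the decomposition and order the vertices by the depth of their topmost bag. Then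
each vertex `v`, together with the neighbours below `v` (the lower boundary) of its component in
`G[≥ v]` (the upper component), lies in a single bag. In increasing order of `b`, grow the cluster
of `b`: the component of `b` among the uncovered vertices within `ρ / 2` of `b` or of its lower
boundary. Splitting each cluster according to a nearby center in `{b} ∪ lowerBoundary b` gives at
most `k` parts per cluster, of weak diameter at most `ρ`.

It remains to count the clusters reached by a descending walk of weight `r`. A walk that enters the
cluster of `b` from a later one and then leaves the upper component of `b` passes through the lower
boundary of `b`, and so pays more than `ρ / 2`, since the vertex preceding the cluster was not
absorbed by that cluster. Each such payment uses up one of `⌈2 * r / ρ⌉` units of budget. Branching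
over the leaders on the lower boundary gives `(k + 1) ^ (2 * n)` for budget `n`. Descending to the
least leader in the boundary instead, either the boundary width `s` or the budget `n` drops, so that
`B (s + 1) (n + 1) ≤ 2 * B s (n + 1) + B (s + 1) n`, which is solved by `2 ^ s * (s + n).choose s`.
-/

section General

variable {α : Type*}

lemma ncard_biUnion_le {β : Type*} {A : Set α} (hA : A.Finite) {f : α → Set β} {m : ℕ}
    (hf : ∀ a ∈ A, (f a).ncard ≤ m) : (⋃ a ∈ A, f a).ncard ≤ A.ncard * m := by
  lift A to Finset α using hA
  rw [Set.ncard_coe_finset]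
  exact (A.set_ncard_biUnion_le f).trans (A.sum_le_card_nsmul _ m hf)

lemma ncard_le_ncard_inter_Ioi_add_ncard_inter_Iio [LinearOrder α] {S : Set α} (hS : S.Finite)
    (a : α) : S.ncard ≤ (S ∩ Set.Ioi a).ncard + 1 + (S ∩ Set.Iio a).ncard := by
  have hcover : S ⊆ insert a (S ∩ Set.Ioi a) ∪ S ∩ Set.Iio a := by
    intro b hb
    rcases lt_trichotomy b a with hlt | rfl | hgt
    · exact Or.inr ⟨hb, hlt⟩
    · exact Or.inl (Set.mem_insert _ _)
    · exact Or.inl (Set.mem_insert_of_mem _ ⟨hb, hgt⟩)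
  have hfin : (insert a (S ∩ Set.Ioi a) ∪ S ∩ Set.Iio a).Finite :=
    ((hS.inter_of_left _).insert a).union (hS.inter_of_left _)
  calc S.ncard ≤ (insert a (S ∩ Set.Ioi a) ∪ S ∩ Set.Iio a).ncard := Set.ncard_le_ncard hcover hfin
    _ ≤ (insert a (S ∩ Set.Ioi a)).ncard + (S ∩ Set.Iio a).ncard := Set.ncard_union_le _ _
    _ ≤ (S ∩ Set.Ioi a).ncard + 1 + (S ∩ Set.Iio a).ncard := by
      gcongr
      exact Set.ncard_insert_le _ _

lemma exists_le_of_iInf_le [CompleteLinearOrder α] {ι : Sort*} [Finite ι] {f : ι → α} {c : α}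
    (h : ⨅ i, f i ≤ c) (hc : c ≠ ⊤) : ∃ i, f i ≤ c := by
  rcases isEmpty_or_nonempty ι with hι | hι
  · rw [iInf_of_empty, top_le_iff] at h
    exact absurd h hc
  · obtain ⟨i, hi⟩ := (Set.range_nonempty f).csInf_mem (Set.finite_range f)
    exact ⟨i, hi.trans_le h⟩

lemma exists_linearOrder_monotone {β : Type*} [LinearOrder β] (f : α → β) :
    ∃ _ : LinearOrder α, Monotone f := by
  obtain ⟨_, -⟩ := exists_wellFoundedLT α
  let key : α → β ×ₗ α := fun a => toLex (f a, a)
  have hkey : Function.Injective key := fun a b h => (Prod.ext_iff.1 (toLex.injective h)).2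
  exact ⟨LinearOrder.lift' key hkey, fun a b h => Prod.Lex.monotone_fst (key a) (key b) h⟩

lemma ofReal_le_ceil_mul_ofReal {ρ : ℝ} (hρ : 0 < ρ) (r : ℝ) :
    ENNReal.ofReal r ≤ ⌈2 * r / ρ⌉₊ * ENNReal.ofReal (ρ / 2) := by
  calc ENNReal.ofReal r ≤ ENNReal.ofReal (⌈2 * r / ρ⌉₊ * (ρ / 2)) := by
        refine ENNReal.ofReal_le_ofReal ?_
        have hceil := Nat.le_ceil (2 * r / ρ)
        rw [div_le_iff₀ hρ] at hceil
        linarith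
    _ = ⌈2 * r / ρ⌉₊ * ENNReal.ofReal (ρ / 2) := by
        rw [ENNReal.ofReal_mul (Nat.cast_nonneg _), ENNReal.ofReal_natCast]

lemma mul_succ_pow_le_pow (k n : ℕ) : k * (k + 1) ^ (2 * n) ≤ (2 * n + k + 1) ^ (3 * n + 4) := by
  calc k * (k + 1) ^ (2 * n) ≤ (2 * n + k + 1) * (2 * n + k + 1) ^ (2 * n) := by
        gcongr <;> lia
    _ = (2 * n + k + 1) ^ (2 * n + 1) := (pow_succ' _ _).symm
    _ ≤ (2 * n + k + 1) ^ (3 * n + 4) := Nat.pow_le_pow_right (by lia) (by lia)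

end General

section Walk

variable {α : Type*} {G : SimpleGraph α}

lemma exists_eq_append_cons_of_notMem_of_mem {S : Set α} {x z : α} (p : G.Walk x z) (hx : x ∉ S)
    (hz : z ∈ S) : ∃ (y a : α) (p₁ : G.Walk x y) (h : G.Adj y a) (p₂ : G.Walk a z),
      (∀ u ∈ p₁.support, u ∉ S) ∧ a ∈ S ∧ p = p₁.append (.cons h p₂) := by
  induction p with
  | nil => exact absurd hz hx
  | @cons x b z h p ih =>
    by_cases hb : b ∈ S
    · exact ⟨x, b, .nil, h, p, by simpa using hx, hb, rfl⟩
    · obtain ⟨y, a, p₁, h', p₂, hp₁, ha, rfl⟩ := ih hb hz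
      exact ⟨y, a, .cons h p₁, h', p₂, by simpa using ⟨hx, hp₁⟩, ha, rfl⟩

lemma exists_walk_sum_le [Finite α] {f : Sym2 α → ℝ≥0∞} {a b : α} {c : ℝ≥0∞}
    (h : ⨅ p : G.Walk a b, (p.edges.map f).sum ≤ c) (hc : c ≠ ⊤) :
    ∃ p : G.Walk a b, (p.edges.map f).sum ≤ c := by
  classical
  have := Fintype.ofFinite α
  have hpath : ⨅ q : G.Path a b, (q.1.edges.map f).sum ≤ c := by
    refine le_trans (le_iInf fun p => iInf_le_of_le p.toPath ?_) h
    exact (p.edges_bypass_sublist_edges.map f).sum_le_sum (by simp)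
  obtain ⟨q, hq⟩ := exists_le_of_iInf_le hpath hc
  exact ⟨q.1, hq⟩

lemma exists_walk_of_induce {S : Set α} {a b : S} (p : (G.induce S).Walk a b) :
    ∃ q : G.Walk a b, (∀ u ∈ q.support, u ∈ S) ∧ q.edges = p.edges.map (Sym2.map (↑)) := by
  induction p with
  | nil => exact ⟨.nil, by simp, rfl⟩
  | @cons a c b hac p ih =>
    obtain ⟨q, hqS, hq⟩ := ih
    have hac' : G.Adj a c := hac
    exact ⟨.cons hac' q, by simpa using hqS, by simp [hq]⟩

/-- The vertex set of the connected component of `a` in the subgraph of `G` induced on `S`, as a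
set of vertices of `G`; it is empty if `a ∉ S`. -/
def component (G : SimpleGraph α) (S : Set α) (a : α) : Set α :=
  {x | ∃ p : G.Walk a x, ∀ u ∈ p.support, u ∈ S}

variable {S : Set α} {a x y : α}

lemma mem_component_self (ha : a ∈ S) : a ∈ component G S a :=
  ⟨.nil, by simpa using ha⟩

lemma component_subset : component G S a ⊆ S :=
  fun _ ⟨p, hp⟩ => hp _ p.end_mem_support

lemma component_mono {S' : Set α} (h : S ⊆ S') : component G S a ⊆ component G S' a :=
  fun _ ⟨p, hp⟩ => ⟨p, fun u hu => h (hp u hu)⟩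

lemma mem_component_trans (hx : x ∈ component G S a) (hy : y ∈ component G S x) :
    y ∈ component G S a := by
  obtain ⟨p, hp⟩ := hx
  obtain ⟨q, hq⟩ := hy
  exact ⟨p.append q, fun u hu => ((p.mem_support_append_iff q).1 hu).elim (hp u) (hq u)⟩

lemma mem_component_symm (hx : x ∈ component G S a) : a ∈ component G S x := by
  obtain ⟨p, hp⟩ := hx
  exact ⟨p.reverse, by simpa using hp⟩

lemma mem_component_of_adj (hx : x ∈ component G S a) (hxy : G.Adj x y) (hy : y ∈ S) :
    y ∈ component G S a :=
  mem_component_trans hx ⟨hxy.toWalk, by simpa using ⟨component_subset hx, hy⟩⟩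

lemma mem_component_component (hx : x ∈ component G S a) :
    x ∈ component G (component G S a) a := by
  classical
  obtain ⟨p, hp⟩ := hx
  exact ⟨p, fun u hu =>
    ⟨p.takeUntil u hu, fun v hv => hp v (p.support_takeUntil_subset_support hu hv)⟩⟩

end Walk

section Weight

variable {G : SimpleGraph V} {w : Sym2 V → ℝ≥0∞}

@[simp] lemma walkWeight_nil (u : V) : walkWeight w (.nil : G.Walk u u) = 0 := rfl

@[simp] lemma walkWeight_cons {u v x : V} (h : G.Adj u v) (p : G.Walk v x) :
    walkWeight w (.cons h p) = w s(u, v) + walkWeight w p := by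
  simp [walkWeight]

@[simp] lemma walkWeight_append {u v x : V} (p : G.Walk u v) (q : G.Walk v x) :
    walkWeight w (p.append q) = walkWeight w p + walkWeight w q := by
  simp [walkWeight]

@[simp] lemma walkWeight_reverse {u v : V} (p : G.Walk u v) :
    walkWeight w p.reverse = walkWeight w p := by
  simp [walkWeight]

lemma gdist_le_walkWeight {u v : V} (p : G.Walk u v) : gdist G w u v ≤ walkWeight w p :=
  iInf_le _ p

@[simp] lemma gdist_self (u : V) : gdist G w u u = 0 :=
  nonpos_iff_eq_zero.1 (gdist_le_walkWeight .nil)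

lemma gdist_comm (u v : V) : gdist G w u v = gdist G w v u := by
  have hle (a b : V) : gdist G w a b ≤ gdist G w b a :=
    le_iInf fun p => (gdist_le_walkWeight p.reverse).trans_eq (walkWeight_reverse p)
  exact le_antisymm (hle u v) (hle v u)

lemma gdist_triangle (u v x : V) : gdist G w u x ≤ gdist G w u v + gdist G w v x :=
  ENNReal.le_iInf_add_iInf fun p q =>
    (gdist_le_walkWeight (p.append q)).trans_eq (walkWeight_append p q)

lemma exists_walk_of_setDistOn_le [Finite V] {S A B : Set V} {c : ℝ≥0∞}
    (h : setDistOn G w S A B ≤ c) (hc : c ≠ ⊤) :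
    ∃ a ∈ A, ∃ b ∈ B, ∃ p : G.Walk a b, (∀ u ∈ p.support, u ∈ S) ∧ walkWeight w p ≤ c := by
  obtain ⟨a, h⟩ := exists_le_of_iInf_le h hc
  obtain ⟨ha, h⟩ := exists_le_of_iInf_le h hc
  obtain ⟨b, h⟩ := exists_le_of_iInf_le h hc
  obtain ⟨hb, h⟩ := exists_le_of_iInf_le h hc
  obtain ⟨haS, h⟩ := exists_le_of_iInf_le h hc
  obtain ⟨hbS, h⟩ := exists_le_of_iInf_le h hc
  obtain ⟨p, hp⟩ := exists_walk_sum_le h hc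
  obtain ⟨q, hqS, hq⟩ := exists_walk_of_induce p
  exact ⟨a, ha, b, hb, q, hqS, by simpa [walkWeight, hq, Function.comp_def] using hp⟩

lemma wcol_le {P : Set (Set V)} {le : Set V → Set V → Prop} {r : ℝ} {m : ℕ}
    (h : ∀ X ∈ P, {Y | Y ∈ P ∧ WReach G w P le r X Y}.ncard ≤ m) : wcol G w P le r ≤ m :=
  ciSup_le' fun X => ciSup_le' fun hX => h X hX

end Weight

section UpperComponent

variable {α : Type*} [LinearOrder α] {G : SimpleGraph α} {a b u v x y : α}

/-- The vertices that `v` can reach without passing below `v`: the descendants of `v` in the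
elimination tree of `G` for the given order. -/
def upperComponent (G : SimpleGraph α) (v : α) : Set α := component G (Set.Ici v) v

/-- The vertices below `v` that are adjacent to its upper component. The vertex `v` with these
forms the bag of `v` in the tree decomposition associated with the elimination order. -/
def lowerBoundary (G : SimpleGraph α) (v : α) : Set α :=
  {u | u < v ∧ ∃ x ∈ upperComponent G v, G.Adj x u}

lemma self_mem_upperComponent : v ∈ upperComponent G v := mem_component_self (le_refl v)

lemma le_of_mem_upperComponent (hx : x ∈ upperComponent G v) : v ≤ x := component_subset hx

lemma mem_upperComponent_or_lowerBoundary_of_adj (hx : x ∈ upperComponent G v)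
    (hxy : G.Adj x y) : y ∈ upperComponent G v ∨ y ∈ lowerBoundary G v :=
  (le_or_gt v y).imp (mem_component_of_adj hx hxy) fun hy => ⟨hy, x, hx, hxy⟩

lemma upperComponent_subset (hb : b ∈ upperComponent G a) :
    upperComponent G b ⊆ upperComponent G a := fun _ hx =>
  mem_component_trans hb (component_mono (Set.Ici_subset_Ici.2 (le_of_mem_upperComponent hb)) hx)

lemma mem_upperComponent_of_le (ha : x ∈ upperComponent G a) (hb : x ∈ upperComponent G b)
    (hab : a ≤ b) : b ∈ upperComponent G a :=
  mem_component_trans ha (component_mono (Set.Ici_subset_Ici.2 hab) (mem_component_symm hb))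

lemma mem_upperComponent_of_mem_lowerBoundary (hu : u ∈ lowerBoundary G b)
    (hb : b ∈ upperComponent G v) (hv : v ≤ u) : u ∈ upperComponent G v := by
  obtain ⟨-, x, hx, hxu⟩ := hu
  exact mem_component_of_adj (upperComponent_subset hb hx) hxu hv

end UpperComponent

section Ancestor

variable {ι : Type*} {T : SimpleGraph ι} {r s t t' : ι}

/-- In the tree `T` rooted at `r`, the node `s` is an ancestor of `t`. -/
def IsAncestor (T : SimpleGraph ι) (r s t : ι) : Prop := ∀ p : T.Walk r t, s ∈ p.support

lemma isAncestor_self : IsAncestor T r s s := fun p => p.end_mem_support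

lemma dist_lt_of_mem_support {p : T.Walk r t} (hp : p.length = T.dist r t) (hs : s ∈ p.support)
    (hne : s ≠ t) : T.dist r s < T.dist r t := by
  classical
  calc T.dist r s ≤ (p.takeUntil s hs).length := SimpleGraph.dist_le _
    _ < p.length := SimpleGraph.Walk.length_takeUntil_lt_length hs hne
    _ = T.dist r t := hp

lemma IsAncestor.dist_lt (h : IsAncestor T r s t) (hT : T.Connected) (hne : s ≠ t) :
    T.dist r s < T.dist r t := by
  obtain ⟨p, hp⟩ := hT.exists_walk_length_eq_dist r t
  exact dist_lt_of_mem_support hp (h p) hne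

lemma isAncestor_of_adj (hT : T.IsTree) (hst : T.Adj s t) (hd : T.dist r s ≤ T.dist r t) :
    IsAncestor T r s t := by
  classical
  intro q
  obtain ⟨p, hp, hlen⟩ := hT.connected.exists_path_of_dist r s
  have ht : t ∉ p.support := fun ht => hd.not_gt (dist_lt_of_mem_support hlen ht hst.ne')
  have hq : p.concat hst = q.bypass :=
    (hT.existsUnique_path r t).unique (hp.concat ht hst) q.bypass_isPath
  apply q.support_bypass_subset_support
  rw [← hq, SimpleGraph.Walk.support_concat]
  simp

lemma IsAncestor.of_adj (h : IsAncestor T r s t) (hT : T.IsTree) (hadj : T.Adj t t')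
    (hd : s = t → T.dist r s ≤ T.dist r t') : IsAncestor T r s t' := by
  rcases eq_or_ne s t with rfl | hne
  · exact isAncestor_of_adj hT hadj (hd rfl)
  · intro p
    have hs : s ∈ (p.concat hadj.symm).support := h _
    simpa [SimpleGraph.Walk.support_concat, hne] using hs

lemma IsAncestor.of_preconnected {C : Set ι} (h : IsAncestor T r s t) (hT : T.IsTree)
    (hC : (T.induce C).Preconnected) (hs : s ∈ C → ∀ c ∈ C, T.dist r s ≤ T.dist r c)
    (ht : t ∈ C) (ht' : t' ∈ C) : IsAncestor T r s t' := by
  obtain ⟨p⟩ := hC ⟨t, ht⟩ ⟨t', ht'⟩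
  have hspread (a b : C) (p : (T.induce C).Walk a b) (ha : IsAncestor T r s a) :
      IsAncestor T r s b := by
    induction p with
    | nil => exact ha
    | @cons a c _ hac _ ih =>
      exact ih (ha.of_adj hT hac fun hsa => hs (hsa ▸ a.2) c c.2)
  exact hspread _ _ p h

end Ancestor

section TreeDecomposition

variable {ι : Type} {T : SimpleGraph ι} {r t : ι} {G : SimpleGraph V}
  {bag : ι → Set V} {top : V → ι}

lemma isAncestor_of_mem_upperComponent [LinearOrder V] (htd : IsTreeDecompOf G T bag)
    (htop : ∀ v, v ∈ bag (top v)) (hmin : ∀ v, IsMinOn (T.dist r) {t | v ∈ bag t} (top v))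
    (hmono : Monotone fun v => T.dist r (top v)) {v x : V} (hx : x ∈ upperComponent G v)
    (ht : x ∈ bag t) : IsAncestor T r (top v) t := by
  obtain ⟨hT, hedge, hconn⟩ := htd
  have hspread {y : V} (hy : v ≤ y) {t t' : ι} (ht : y ∈ bag t) (ht' : y ∈ bag t')
      (h : IsAncestor T r (top v) t) : IsAncestor T r (top v) t' :=
    h.of_preconnected hT (hconn y).preconnected
      (fun _ c hc => (hmono hy).trans (hmin y hc)) ht ht'
  have hwalk {a x : V} (p : G.Walk a x) (hp : ∀ u ∈ p.support, v ≤ u)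
      (ha : ∀ t, a ∈ bag t → IsAncestor T r (top v) t) :
      ∀ t, x ∈ bag t → IsAncestor T r (top v) t := by
    induction p with
    | nil => exact ha
    | @cons a b x hab p ih =>
      rw [SimpleGraph.Walk.support_cons, List.forall_mem_cons] at hp
      obtain ⟨t₀, ha₀, hb₀⟩ := hedge a b hab
      exact ih hp.2 fun t ht => hspread (hp.2 b p.start_mem_support) hb₀ ht (ha t₀ ha₀)
  obtain ⟨p, hp⟩ := hx
  exact hwalk p hp (fun t ht => hspread le_rfl (htop v) ht isAncestor_self) t ht

lemma insert_lowerBoundary_subset_bag [LinearOrder V] (htd : IsTreeDecompOf G T bag)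
    (htop : ∀ v, v ∈ bag (top v)) (hmin : ∀ v, IsMinOn (T.dist r) {t | v ∈ bag t} (top v))
    (hmono : Monotone fun v => T.dist r (top v)) (v : V) :
    insert v (lowerBoundary G v) ⊆ bag (top v) := by
  rintro u (rfl | ⟨huv, x, hx, hxu⟩)
  · exact htop u
  · by_contra hu
    obtain ⟨t, hxt, hut⟩ := htd.2.1 x u hxu
    have hanc : IsAncestor T r (top v) (top u) :=
      (isAncestor_of_mem_upperComponent htd htop hmin hmono hx hxt).of_preconnected htd.1
        (htd.2.2 u).preconnected (fun h => absurd h hu) hut (htop u)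
    have hlt : T.dist r (top v) < T.dist r (top u) :=
      hanc.dist_lt htd.1.connected fun h => hu (h ▸ htop u)
    exact (hmono huv.le).not_gt hlt

lemma exists_linearOrder_ncard_insert_lowerBoundary_le [Finite V] {k : ℕ}
    (htd : IsTreeDecompOf G T bag) (hbag : ∀ t, (bag t).ncard ≤ k) :
    ∃ _ : LinearOrder V, ∀ v, (insert v (lowerBoundary G v)).ncard ≤ k := by
  obtain ⟨r⟩ := htd.1.connected.nonempty
  have hne (v : V) : {t | v ∈ bag t}.Nonempty := Set.nonempty_coe_sort.1 (htd.2.2 v).nonempty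
  have hex (v : V) : ∃ t, v ∈ bag t ∧ IsMinOn (T.dist r) {t | v ∈ bag t} t :=
    ⟨_, Function.argminOn_mem (T.dist r) _ (hne v),
      fun _ ht => Function.argminOn_le (T.dist r) _ ht⟩
  choose top htop hmin using hex
  obtain ⟨order, hmono⟩ := exists_linearOrder_monotone fun v => T.dist r (top v)
  refine ⟨order, fun v => ?_⟩
  calc (insert v (lowerBoundary G v)).ncard ≤ (bag (top v)).ncard :=
        Set.ncard_le_ncard (insert_lowerBoundary_subset_bag htd htop hmin hmono v)
    _ ≤ k := hbag _

end TreeDecomposition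


section Clustering

variable [LinearOrder V] {G : SimpleGraph V} {w : Sym2 V → ℝ≥0∞} {δ : ℝ≥0∞} {ℓ : V → V}
  {b h j v x : V}

/-- The function `ℓ` assigns to each vertex the leader of its cluster. Clusters are connected, every
vertex of the cluster of `b` is within `δ` of `b` or of its lower boundary, and a vertex adjacent
to this cluster that joins a later one is further than `δ` from the lower boundary of `b`. -/
structure IsClustering (G : SimpleGraph V) (w : Sym2 V → ℝ≥0∞) (δ : ℝ≥0∞) (ℓ : V → V) : Prop where
  le (x : V) : ℓ x ≤ x
  mem_component (x : V) : x ∈ component G {y | ℓ y = ℓ x} (ℓ x)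
  near (x : V) : ∃ y ∈ insert (ℓ x) (lowerBoundary G (ℓ x)), gdist G w x y ≤ δ
  far {a x y : V} (hxa : G.Adj x a) (hlt : ℓ a < ℓ x) (hy : y ∈ lowerBoundary G (ℓ a)) :
    δ < gdist G w x y

/-- The greedy cluster of `b`: among the vertices outside all earlier clusters that are within `δ`
of `b` or of its lower boundary, the connected component of `b`. It is empty if `b` itself lies in
an earlier cluster. -/
noncomputable def cluster [WellFoundedLT V] (G : SimpleGraph V) (w : Sym2 V → ℝ≥0∞) (δ : ℝ≥0∞)
    (b : V) : Set V :=
  component G {y | (∀ b', b' < b → y ∉ cluster G w δ b') ∧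
    ∃ c ∈ insert b (lowerBoundary G b), gdist G w y c ≤ δ} b
termination_by wellFounded_lt.wrap b
decreasing_by assumption

lemma exists_le_mem_cluster [WellFoundedLT V] (x : V) : ∃ b ≤ x, x ∈ cluster G w δ b := by
  by_contra! hx
  refine hx x le_rfl ?_
  rw [cluster]
  exact mem_component_self ⟨fun b' hb' => hx b' hb'.le, x, Set.mem_insert _ _, by simp⟩

lemma eq_of_mem_cluster [WellFoundedLT V] {b' : V} (hb : x ∈ cluster G w δ b)
    (hb' : x ∈ cluster G w δ b') : b = b' := by
  wlog hlt : b < b' generalizing b b'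
  · exact (not_lt.1 hlt).eq_or_lt.elim Eq.symm fun h => (this hb' hb h).symm
  rw [cluster] at hb'
  exact absurd hb ((component_subset hb').1 b hlt)

variable (G w δ) in
lemma exists_isClustering [WellFoundedLT V] : ∃ ℓ, IsClustering G w δ ℓ := by
  choose ℓ hle hmem using exists_le_mem_cluster (G := G) (w := w) (δ := δ)
  have hcluster (b : V) : cluster G w δ b ⊆ {y | ℓ y = b} :=
    fun y hy => eq_of_mem_cluster (hmem y) hy
  refine ⟨ℓ, hle, fun x => ?_, fun x => ?_, fun {a x y} hxa hlt hy => ?_⟩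
  · have hx := hmem x
    rw [cluster] at hx
    refine component_mono ?_ (mem_component_component hx)
    rw [← cluster]
    exact hcluster _
  · have hx := hmem x
    rw [cluster] at hx
    exact (component_subset hx).2
  · by_contra! hxy
    have ha := hmem a
    have hx : x ∈ cluster G w δ (ℓ a) := by
      rw [cluster] at ha ⊢
      refine mem_component_of_adj ha hxa.symm
        ⟨fun b hb hxb => ?_, y, Set.mem_insert_of_mem _ hy, hxy⟩
      exact (hb.trans hlt).ne' (hcluster b hxb)
    exact hlt.ne' (hcluster _ hx)

/-- The leaders of the clusters meeting the lower boundary of `v`. -/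
def boundaryLeaders (G : SimpleGraph V) (ℓ : V → V) (v : V) : Set V := ℓ '' lowerBoundary G v

namespace IsClustering

lemma mem_upperComponent (hℓ : IsClustering G w δ ℓ) (x : V) : x ∈ upperComponent G (ℓ x) :=
  component_mono (fun y (hy : ℓ y = ℓ x) => hy ▸ hℓ.le y) (hℓ.mem_component x)

lemma lt_of_mem_boundaryLeaders (hℓ : IsClustering G w δ ℓ) (hj : j ∈ boundaryLeaders G ℓ v) :
    j < v := by
  obtain ⟨u, hu, rfl⟩ := hj
  exact (hℓ.le u).trans_lt hu.1

-- The path from `x` to its leader inside the cluster leaves the upper component of `v` through the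
-- lower boundary.
lemma leader_mem_boundaryLeaders (hℓ : IsClustering G w δ ℓ)
    (hx : x ∈ upperComponent G v ∨ x ∈ lowerBoundary G v) (hlt : ℓ x < v) :
    ℓ x ∈ boundaryLeaders G ℓ v := by
  rcases hx with hx | hx
  · obtain ⟨p, hp⟩ := mem_component_symm (hℓ.mem_component x)
    obtain ⟨y, a, p₁, hya, p₂, hp₁, ha, rfl⟩ :=
      exists_eq_append_cons_of_notMem_of_mem (S := (upperComponent G v)ᶜ) p (not_not.2 hx)
        fun hmem => (le_of_mem_upperComponent hmem).not_gt hlt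
    have hy : y ∈ upperComponent G v := not_not.1 (hp₁ y p₁.end_mem_support)
    exact ⟨a, (mem_upperComponent_or_lowerBoundary_of_adj hy hya).resolve_left ha, hp a (by simp)⟩
  · exact ⟨x, hx, rfl⟩

lemma mem_boundaryLeaders_of_mem_upperComponent (hℓ : IsClustering G w δ ℓ)
    (hj : j ∈ boundaryLeaders G ℓ b) (hlt : j < v) (hb : b ∈ upperComponent G v) :
    j ∈ boundaryLeaders G ℓ v := by
  obtain ⟨u, ⟨-, x, hx, hxu⟩, rfl⟩ := hj
  exact hℓ.leader_mem_boundaryLeaders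
    (mem_upperComponent_or_lowerBoundary_of_adj (upperComponent_subset hb hx) hxu) hlt

lemma mem_upperComponent_of_mem_boundaryLeaders (hℓ : IsClustering G w δ ℓ)
    (hj : j ∈ boundaryLeaders G ℓ v) : v ∈ upperComponent G j := by
  have hjv : j ≤ v := (hℓ.lt_of_mem_boundaryLeaders hj).le
  obtain ⟨u, ⟨-, x, hx, hxu⟩, rfl⟩ := hj
  have hxj : x ∈ upperComponent G (ℓ u) :=
    mem_component_of_adj (hℓ.mem_upperComponent u) hxu.symm
      (hjv.trans (le_of_mem_upperComponent hx))
  exact mem_upperComponent_of_le hxj hx hjv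

lemma exists_walk_from_lowerBoundary (hℓ : IsClustering G w δ ℓ) {a z : V} (hxa : G.Adj x a)
    (hlt : ℓ a < ℓ x) (p : G.Walk a z) (hz : z ∉ upperComponent G (ℓ a)) :
    ∃ y ∈ lowerBoundary G (ℓ a), ∃ q : G.Walk y z, q.support ⊆ p.support ∧
      ∃ c, δ < c ∧ c + walkWeight w q ≤ w s(x, a) + walkWeight w p := by
  obtain ⟨y', y, p₁, hy'y, q, hp₁, hy, rfl⟩ :=
    exists_eq_append_cons_of_notMem_of_mem (S := (upperComponent G (ℓ a))ᶜ) p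
      (not_not.2 (hℓ.mem_upperComponent a)) hz
  have hy' : y' ∈ upperComponent G (ℓ a) := not_not.1 (hp₁ y' p₁.end_mem_support)
  have hyB : y ∈ lowerBoundary G (ℓ a) :=
    (mem_upperComponent_or_lowerBoundary_of_adj hy' hy'y).resolve_left hy
  refine ⟨y, hyB, q, fun u hu => by simp [hu], walkWeight w (.cons hxa (p₁.append hy'y.toWalk)),
    (hℓ.far hxa hlt hyB).trans_le (gdist_le_walkWeight _), ?_⟩
  simp [add_assoc]

end IsClustering

end Clustering

section WeakLeaders

variable [LinearOrder V] {G : SimpleGraph V} {w : Sym2 V → ℝ≥0∞} {δ r : ℝ≥0∞} {ℓ : V → V}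
  {h h₁ h₂ j x : V} {I : Set V}

/-- Some walk of weight at most `r` leads from `x` to the cluster of `j` without meeting a cluster
before that of `j`. The budget `r` must be positive, so that nothing is reachable once a walk has
used it up. -/
def LeaderReach (G : SimpleGraph V) (w : Sym2 V → ℝ≥0∞) (ℓ : V → V) (r : ℝ≥0∞) (x j : V) : Prop :=
  0 < r ∧ ∃ z, ℓ z = j ∧ ∃ p : G.Walk x z, (∀ u ∈ p.support, j ≤ ℓ u) ∧ walkWeight w p ≤ r

lemma LeaderReach.le_leader (hj : LeaderReach G w ℓ r x j) : j ≤ ℓ x :=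
  let ⟨_, _, _, p, hp, _⟩ := hj
  hp x p.start_mem_support

/-- The leaders before `h` reachable with budget `r` from a vertex of the upper component of `h`
whose cluster is not before that of `h`. -/
def weakLeaders (G : SimpleGraph V) (w : Sym2 V → ℝ≥0∞) (ℓ : V → V) (h : V) (r : ℝ≥0∞) : Set V :=
  {j | j < h ∧ ∃ x ∈ upperComponent G h, h ≤ ℓ x ∧ LeaderReach G w ℓ r x j}

lemma weakLeaders_zero : weakLeaders G w ℓ h 0 = ∅ :=
  Set.eq_empty_of_forall_notMem fun _ ⟨_, _, _, _, h0, _⟩ => h0.false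

namespace IsClustering

lemma exists_mem_boundaryLeaders_of_mem_weakLeaders (hℓ : IsClustering G w δ ℓ)
    (hj : j ∈ weakLeaders G w ℓ h r) : ∃ b ∈ boundaryLeaders G ℓ h, j ≤ b ∧
      (j = b ∨ j ∈ boundaryLeaders G ℓ b ∨
        ∃ y ∈ lowerBoundary G b, LeaderReach G w ℓ (r - δ) y j) := by
  obtain ⟨hjh, x, hx, hhx, -, z, rfl, p, hp, hpr⟩ := hj
  obtain ⟨x', a, p₁, hxa, p₂, hp₁, ha, rfl⟩ :=
    exists_eq_append_cons_of_notMem_of_mem (S := {u | u ∈ upperComponent G h → ℓ u < h}) p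
      (fun hmem => (hmem hx).not_ge hhx) (fun _ => hjh)
  obtain ⟨hx', hhx'⟩ : x' ∈ upperComponent G h ∧ h ≤ ℓ x' := by
    simpa using hp₁ x' p₁.end_mem_support
  have ha_mem := mem_upperComponent_or_lowerBoundary_of_adj hx' hxa
  have hah : ℓ a < h := ha_mem.elim ha fun hlow => (hℓ.le a).trans_lt hlow.1
  have hza : ℓ z ≤ ℓ a := hp a (by simp)
  refine ⟨ℓ a, hℓ.leader_mem_boundaryLeaders ha_mem hah, hza, ?_⟩
  rcases hza.eq_or_lt with heq | hlt
  · exact Or.inl heq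
  refine Or.inr ?_
  by_cases hz : z ∈ upperComponent G (ℓ a)
  · exact Or.inl (hℓ.leader_mem_boundaryLeaders (Or.inl hz) hlt)
  · obtain ⟨y, hy, q, hqp, c, hδc, hcq⟩ :=
      hℓ.exists_walk_from_lowerBoundary hxa (hah.trans_le hhx') p₂ hz
    have hcr : c + walkWeight w q ≤ r := by
      refine hcq.trans (le_trans ?_ hpr)
      simp
    refine Or.inr ⟨y, hy, tsub_pos_of_lt (hδc.trans_le (le_self_add.trans hcr)), z, rfl, q,
      fun u hu => hp u (by simp [hqp hu]), ?_⟩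
    exact ENNReal.le_sub_of_add_le_left hδc.ne_top ((add_le_add_left hδc.le _).trans hcr)

lemma weakLeaders_inter_eq_empty (hℓ : IsClustering G w δ ℓ) (hI : IsUpperSet I)
    (hempty : boundaryLeaders G ℓ h ∩ I = ∅) : weakLeaders G w ℓ h r ∩ I = ∅ := by
  refine Set.eq_empty_of_forall_notMem fun j ⟨hj, hjI⟩ => ?_
  obtain ⟨b, hb, hjb, -⟩ := hℓ.exists_mem_boundaryLeaders_of_mem_weakLeaders hj
  exact hempty.le ⟨hb, hI hjb hjI⟩

lemma mem_weakLeaders_of_lt (hℓ : IsClustering G w δ ℓ) (hh₁ : h₁ ∈ boundaryLeaders G ℓ h)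
    (hj : j ∈ weakLeaders G w ℓ h r) (hlt : j < h₁) : j ∈ weakLeaders G w ℓ h₁ r := by
  obtain ⟨-, x, hx, hhx, hreach⟩ := hj
  exact ⟨hlt, x, upperComponent_subset (hℓ.mem_upperComponent_of_mem_boundaryLeaders hh₁) hx,
    (hℓ.lt_of_mem_boundaryLeaders hh₁).le.trans hhx, hreach⟩

-- Two descents to the least boundary leader in `I` use up `δ` of the budget.
lemma mem_weakLeaders_sub (hℓ : IsClustering G w δ ℓ) (hI : IsUpperSet I)
    (hh₁ : IsLeast (boundaryLeaders G ℓ h ∩ I) h₁) (hh₂ : IsLeast (boundaryLeaders G ℓ h₁ ∩ I) h₂)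
    (hj : j ∈ weakLeaders G w ℓ h r) (hjI : j ∈ I) (hlt : j < h₂) :
    j ∈ weakLeaders G w ℓ h₂ (r - δ) := by
  obtain ⟨b, hb, hjb, hcases⟩ := hℓ.exists_mem_boundaryLeaders_of_mem_weakLeaders hj
  have h₁b : h₁ ≤ b := hh₁.2 ⟨hb, hI hjb hjI⟩
  have h₂₁ : h₂ < h₁ := hℓ.lt_of_mem_boundaryLeaders hh₂.1.1
  have hbh₁ : b ∈ upperComponent G h₁ :=
    mem_upperComponent_of_le (hℓ.mem_upperComponent_of_mem_boundaryLeaders hh₁.1.1)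
      (hℓ.mem_upperComponent_of_mem_boundaryLeaders hb) h₁b
  have hh₁h₂ : h₁ ∈ upperComponent G h₂ := hℓ.mem_upperComponent_of_mem_boundaryLeaders hh₂.1.1
  rcases hcases with rfl | hjb | ⟨y, hy, hreach⟩
  · exact absurd h₁b (hlt.trans h₂₁).not_ge
  · have hj₁ := hℓ.mem_boundaryLeaders_of_mem_upperComponent hjb (hlt.trans h₂₁) hbh₁
    exact absurd (hh₂.2 ⟨hj₁, hjI⟩) hlt.not_ge
  · have hy₁ : y ∈ upperComponent G h₁ ∨ y ∈ lowerBoundary G h₁ := by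
      obtain ⟨-, x, hx, hxy⟩ := hy
      exact mem_upperComponent_or_lowerBoundary_of_adj (upperComponent_subset hbh₁ hx) hxy
    have h₂y : h₂ ≤ ℓ y := by
      rcases lt_or_ge (ℓ y) h₁ with hy₁' | hy₁'
      · exact hh₂.2 ⟨hℓ.leader_mem_boundaryLeaders hy₁ hy₁', hI hreach.le_leader hjI⟩
      · exact h₂₁.le.trans hy₁'
    have hy₂ : y ∈ upperComponent G h₂ := mem_upperComponent_of_mem_lowerBoundary hy
      (upperComponent_subset hh₁h₂ hbh₁) (h₂y.trans (hℓ.le y))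
    exact ⟨hlt, y, hy₂, h₂y, hreach⟩

lemma weakLeaders_subset_biUnion (hℓ : IsClustering G w δ ℓ) :
    weakLeaders G w ℓ h r ⊆ ⋃ b ∈ boundaryLeaders G ℓ h,
      insert b (⋃ c ∈ boundaryLeaders G ℓ b, insert c (weakLeaders G w ℓ c (r - δ))) := by
  intro j hj
  obtain ⟨b, hb, -, hcases⟩ := hℓ.exists_mem_boundaryLeaders_of_mem_weakLeaders hj
  refine Set.mem_biUnion hb ?_
  rcases hcases with rfl | hjb | ⟨y, hy, hreach⟩
  · exact Set.mem_insert _ _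
  · exact Set.mem_insert_of_mem _ (Set.mem_biUnion hjb (Set.mem_insert _ _))
  · refine Set.mem_insert_of_mem _ (Set.mem_biUnion (Set.mem_image_of_mem ℓ hy) ?_)
    exact hreach.le_leader.eq_or_lt.imp id fun hlt =>
      ⟨hlt, y, hℓ.mem_upperComponent y, le_rfl, hreach⟩

end IsClustering

end WeakLeaders

section Counting

variable [LinearOrder V] {G : SimpleGraph V} {w : Sym2 V → ℝ≥0∞} {δ r : ℝ≥0∞} {ℓ : V → V}
  {h h₁ : V} {I : Set V} {s n k F M : ℕ}

/-- Every `v` whose upper component contains `h` has at most `s` boundary leaders in `I`. -/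
def BoundaryWidthLE (G : SimpleGraph V) (ℓ : V → V) (I : Set V) (h : V) (s : ℕ) : Prop :=
  ∀ v, h ∈ upperComponent G v → (boundaryLeaders G ℓ v ∩ I).ncard ≤ s

lemma BoundaryWidthLE.of_mem_upperComponent (hW : BoundaryWidthLE G ℓ I h s)
    (hh : h ∈ upperComponent G h₁) : BoundaryWidthLE G ℓ I h₁ s :=
  fun v hv => hW v (upperComponent_subset hv hh)

namespace IsClustering

variable [Finite V]

lemma boundaryWidthLE_Ioi (hℓ : IsClustering G w δ ℓ) (hI : IsUpperSet I)
    (hW : BoundaryWidthLE G ℓ I h (s + 1)) (hh₁ : h₁ ∈ boundaryLeaders G ℓ h ∩ I) :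
    BoundaryWidthLE G ℓ (Set.Ioi h₁) h s := by
  intro v hv
  rcases le_or_gt v h₁ with hvh₁ | hh₁v
  · have hempty : boundaryLeaders G ℓ v ∩ Set.Ioi h₁ = ∅ :=
      Set.eq_empty_of_forall_notMem fun j ⟨hj, hh₁j⟩ =>
        ((hℓ.lt_of_mem_boundaryLeaders hj).trans_le hvh₁).not_gt hh₁j
    simp [hempty]
  · have hssub : boundaryLeaders G ℓ v ∩ Set.Ioi h₁ ⊂ boundaryLeaders G ℓ v ∩ I := by
      refine Set.ssubset_iff_of_subset
        (Set.inter_subset_inter_right _ fun j hj => hI (le_of_lt hj) hh₁.2) |>.2 ⟨h₁, ?_, ?_⟩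
      · exact ⟨hℓ.mem_boundaryLeaders_of_mem_upperComponent hh₁.1 hh₁v hv, hh₁.2⟩
      · exact fun hmem => lt_irrefl h₁ hmem.2
    exact Nat.lt_succ_iff.1 ((Set.ncard_lt_ncard hssub).trans_le (hW v hv))

-- `F` bounds the recursion with smaller width, `M` the one with smaller budget.
lemma ncard_weakLeaders_inter_Iio_le (hℓ : IsClustering G w δ ℓ) (hI : IsUpperSet I)
    (hF : ∀ I', IsUpperSet I' → ∀ h', BoundaryWidthLE G ℓ I' h' s →
      1 + (weakLeaders G w ℓ h' r ∩ I').ncard ≤ F)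
    (hM : ∀ h', BoundaryWidthLE G ℓ I h' (s + 1) →
      1 + (weakLeaders G w ℓ h' (r - δ) ∩ I).ncard ≤ M)
    (hW : BoundaryWidthLE G ℓ I h (s + 1)) (hh₁ : IsLeast (boundaryLeaders G ℓ h ∩ I) h₁) :
    1 + (weakLeaders G w ℓ h r ∩ I ∩ Set.Iio h₁).ncard ≤ F + M := by
  have hdown : weakLeaders G w ℓ h r ∩ I ∩ Set.Iio h₁ ⊆ weakLeaders G w ℓ h₁ r ∩ I :=
    fun j ⟨⟨hj, hjI⟩, hlt⟩ => ⟨hℓ.mem_weakLeaders_of_lt hh₁.1.1 hj hlt, hjI⟩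
  have hW₁ : BoundaryWidthLE G ℓ I h₁ (s + 1) :=
    hW.of_mem_upperComponent (hℓ.mem_upperComponent_of_mem_boundaryLeaders hh₁.1.1)
  rcases (boundaryLeaders G ℓ h₁ ∩ I).eq_empty_or_nonempty with hempty | hne
  · have hzero : weakLeaders G w ℓ h r ∩ I ∩ Set.Iio h₁ = ∅ :=
      Set.subset_empty_iff.1 (hdown.trans (hℓ.weakLeaders_inter_eq_empty hI hempty).le)
    have := hM h hW
    simp only [hzero, Set.ncard_empty]
    lia
  · obtain ⟨h₂, hh₂⟩ : ∃ h₂, IsLeast (boundaryLeaders G ℓ h₁ ∩ I) h₂ :=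
      Set.exists_min_image _ id (Set.toFinite _) hne
    have hupper : (weakLeaders G w ℓ h r ∩ I ∩ Set.Iio h₁ ∩ Set.Ioi h₂).ncard ≤
        (weakLeaders G w ℓ h₁ r ∩ Set.Ioi h₂).ncard :=
      Set.ncard_le_ncard fun j ⟨hj, hj₂⟩ => ⟨(hdown hj).1, hj₂⟩
    have hlower : (weakLeaders G w ℓ h r ∩ I ∩ Set.Iio h₁ ∩ Set.Iio h₂).ncard ≤
        (weakLeaders G w ℓ h₂ (r - δ) ∩ I).ncard :=
      Set.ncard_le_ncard fun j ⟨⟨⟨hj, hjI⟩, _⟩, hlt⟩ =>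
        ⟨hℓ.mem_weakLeaders_sub hI hh₁ hh₂ hj hjI hlt, hjI⟩
    have hsplit := ncard_le_ncard_inter_Ioi_add_ncard_inter_Iio
      (Set.toFinite (weakLeaders G w ℓ h r ∩ I ∩ Set.Iio h₁)) h₂
    have := hF _ (isUpperSet_Ioi h₂) h₁ (hℓ.boundaryWidthLE_Ioi hI hW₁ hh₂.1)
    have := hM h₂
      (hW₁.of_mem_upperComponent (hℓ.mem_upperComponent_of_mem_boundaryLeaders hh₂.1.1))
    lia

lemma ncard_weakLeaders_inter_le_of_recursion (hℓ : IsClustering G w δ ℓ) (hI : IsUpperSet I)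
    (hF : ∀ I', IsUpperSet I' → ∀ h', BoundaryWidthLE G ℓ I' h' s →
      1 + (weakLeaders G w ℓ h' r ∩ I').ncard ≤ F)
    (hM : ∀ h', BoundaryWidthLE G ℓ I h' (s + 1) →
      1 + (weakLeaders G w ℓ h' (r - δ) ∩ I).ncard ≤ M)
    (hW : BoundaryWidthLE G ℓ I h (s + 1)) :
    1 + (weakLeaders G w ℓ h r ∩ I).ncard ≤ 2 * F + M := by
  rcases (boundaryLeaders G ℓ h ∩ I).eq_empty_or_nonempty with hempty | hne
  · have := hM h hW
    simp only [hℓ.weakLeaders_inter_eq_empty hI hempty, Set.ncard_empty]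
    lia
  · obtain ⟨h₁, hh₁⟩ : ∃ h₁, IsLeast (boundaryLeaders G ℓ h ∩ I) h₁ :=
      Set.exists_min_image _ id (Set.toFinite _) hne
    have hupper : (weakLeaders G w ℓ h r ∩ I ∩ Set.Ioi h₁).ncard ≤
        (weakLeaders G w ℓ h r ∩ Set.Ioi h₁).ncard :=
      Set.ncard_le_ncard fun j ⟨hj, hj₁⟩ => ⟨hj.1, hj₁⟩
    have hlower := hℓ.ncard_weakLeaders_inter_Iio_le hI hF hM hW hh₁
    have hsplit := ncard_le_ncard_inter_Ioi_add_ncard_inter_Iio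
      (Set.toFinite (weakLeaders G w ℓ h r ∩ I)) h₁
    have := hF _ (isUpperSet_Ioi h₁) h (hℓ.boundaryWidthLE_Ioi hI hW hh₁.1)
    lia

lemma ncard_weakLeaders_inter_le_choose (hℓ : IsClustering G w δ ℓ) (hI : IsUpperSet I)
    (hW : BoundaryWidthLE G ℓ I h s) (hr : r ≤ n * δ) :
    1 + (weakLeaders G w ℓ h r ∩ I).ncard ≤ 2 ^ s * (s + n).choose s := by
  induction s generalizing I h r n with
  | zero =>
    have hempty : boundaryLeaders G ℓ h ∩ I = ∅ :=
      (Set.ncard_eq_zero).1 (Nat.le_zero.1 (hW h self_mem_upperComponent))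
    simp [hℓ.weakLeaders_inter_eq_empty hI hempty]
  | succ s ihs =>
    induction n generalizing h r with
    | zero =>
      obtain rfl : r = 0 := by simpa using hr
      simpa [weakLeaders_zero] using Nat.one_le_two_pow
    | succ n ihn =>
      have hr' : r - δ ≤ n * δ := by
        rw [tsub_le_iff_right]
        exact hr.trans_eq (by push_cast; ring)
      have hpascal : (s + 1 + (n + 1)).choose (s + 1) =
          (s + (n + 1)).choose s + (s + 1 + n).choose (s + 1) := by
        rw [show s + 1 + n = s + (n + 1) by lia, Nat.add_right_comm, Nat.choose_succ_succ']
      calc 1 + (weakLeaders G w ℓ h r ∩ I).ncard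
          ≤ 2 * (2 ^ s * (s + (n + 1)).choose s) + 2 ^ (s + 1) * (s + 1 + n).choose (s + 1) :=
            hℓ.ncard_weakLeaders_inter_le_of_recursion hI (fun _ hI' _ hW' => ihs hI' hW' hr)
              (fun _ hW' => ihn hW' hr') hW
        _ = 2 ^ (s + 1) * (s + 1 + (n + 1)).choose (s + 1) := by
            rw [hpascal]
            ring

lemma ncard_weakLeaders_le_pow (hℓ : IsClustering G w δ ℓ)
    (hk : ∀ v, (boundaryLeaders G ℓ v).ncard ≤ k) (hr : r ≤ n * δ) :
    1 + (weakLeaders G w ℓ h r).ncard ≤ (k + 1) ^ (2 * n) := by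
  induction n generalizing h r with
  | zero =>
    obtain rfl : r = 0 := by simpa using hr
    simp [weakLeaders_zero]
  | succ n ih =>
    have hr' : r - δ ≤ n * δ := by
      rw [tsub_le_iff_right]
      exact hr.trans_eq (by push_cast; ring)
    set Q := (k + 1) ^ (2 * n) with hQ
    have hQ_pos : 0 < Q := by positivity
    have hinner (c : V) : (insert c (weakLeaders G w ℓ c (r - δ))).ncard ≤ Q :=
      (Set.ncard_insert_le _ _).trans ((add_comm _ _).trans_le (ih hr'))
    have houter (b : V) : (insert b (⋃ c ∈ boundaryLeaders G ℓ b,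
        insert c (weakLeaders G w ℓ c (r - δ)))).ncard ≤ k * Q + 1 := by
      refine (Set.ncard_insert_le _ _).trans (Nat.succ_le_succ ?_)
      exact (ncard_biUnion_le (Set.toFinite _) fun c _ => hinner c).trans
        (Nat.mul_le_mul_right _ (hk b))
    calc 1 + (weakLeaders G w ℓ h r).ncard ≤ 1 + k * (k * Q + 1) := by
          gcongr
          exact ((Set.ncard_le_ncard hℓ.weakLeaders_subset_biUnion).trans
            (ncard_biUnion_le (Set.toFinite _) fun b _ => houter b)).trans
            (Nat.mul_le_mul_right _ (hk h))
      _ ≤ (k + 1) ^ 2 * Q := by nlinarith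
      _ = (k + 1) ^ (2 * (n + 1)) := by rw [hQ]; ring

end IsClustering

end Counting

section FiberPartition

variable {α : Type} {β : Type*} {φ : α → β} {X Y : Set α} {x y : α}

lemma eq_fiber_of_mem_classes (hX : X ∈ (Setoid.ker φ).classes) (hx : x ∈ X) :
    X = {u | φ u = φ x} := by
  obtain ⟨a, rfl⟩ := hX
  ext u
  exact (Eq.congr_right (hx : φ x = φ a)).symm

/-- The order on the fibers of `φ` induced by the order of the values of `φ`. -/
def fiberLE [LE β] (φ : α → β) (X Y : Set α) : Prop := ∃ x ∈ X, ∃ y ∈ Y, φ x ≤ φ y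

lemma fiberLE_iff [LE β] (hX : X ∈ (Setoid.ker φ).classes) (hY : Y ∈ (Setoid.ker φ).classes)
    (hx : x ∈ X) (hy : y ∈ Y) : fiberLE φ X Y ↔ φ x ≤ φ y := by
  refine ⟨fun ⟨x', hx', y', hy', hle⟩ => ?_, fun hle => ⟨x, hx, y, hy, hle⟩⟩
  rw [eq_fiber_of_mem_classes hX hx] at hx'
  rw [eq_fiber_of_mem_classes hY hy] at hy'
  exact hx'.symm.trans_le (hle.trans_eq hy')

lemma le_of_mem_sUnion_fiberLE [LE β] {u : α} (hY : Y ∈ (Setoid.ker φ).classes)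
    (hy : y ∈ Y) (hu : u ∈ ⋃₀ {Z | Z ∈ (Setoid.ker φ).classes ∧ fiberLE φ Y Z}) : φ y ≤ φ u := by
  obtain ⟨Z, ⟨hZ, hle⟩, hu⟩ := hu
  exact (fiberLE_iff hY hZ hy hu).1 hle

lemma isLinearOrderOn_fiberLE [LinearOrder β] :
    IsLinearOrderOn (Setoid.ker φ).classes (fiberLE φ) := by
  have hne {X : Set α} (hX : X ∈ (Setoid.ker φ).classes) : X.Nonempty :=
    Setoid.nonempty_of_mem_partition (Setoid.isPartition_classes _) hX
  refine ⟨fun X hX => ?_, fun X hX Y hY hXY hYX => ?_, fun X hX Y hY Z hZ hXY hYZ => ?_,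
    fun X hX Y hY => ?_⟩
  · obtain ⟨x, hx⟩ := hne hX
    exact ⟨x, hx, x, hx, le_rfl⟩
  · obtain ⟨x, hx⟩ := hne hX
    obtain ⟨y, hy⟩ := hne hY
    rw [eq_fiber_of_mem_classes hX hx, eq_fiber_of_mem_classes hY hy,
      le_antisymm ((fiberLE_iff hX hY hx hy).1 hXY) ((fiberLE_iff hY hX hy hx).1 hYX)]
  · obtain ⟨x, hx⟩ := hne hX
    obtain ⟨y, hy⟩ := hne hY
    obtain ⟨z, hz⟩ := hne hZ
    exact (fiberLE_iff hX hZ hx hz).2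
      (((fiberLE_iff hX hY hx hy).1 hXY).trans ((fiberLE_iff hY hZ hy hz).1 hYZ))
  · obtain ⟨x, hx⟩ := hne hX
    obtain ⟨y, hy⟩ := hne hY
    exact (le_total (φ x) (φ y)).imp (fiberLE_iff hX hY hx hy).2 (fiberLE_iff hY hX hy hx).2

end FiberPartition

section ClusterPartition

variable {G : SimpleGraph V} {w : Sym2 V → ℝ≥0∞} {δ : ℝ≥0∞} {ℓ center : V → V}
  {k m : ℕ} {r : ℝ}

/-- Labels the part of a vertex by the leader of its cluster and its center; the lexicographic order
of labels compares leaders first. -/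
def partKey (ℓ center : V → V) (x : V) : V ×ₗ V := toLex (ℓ x, center x)

lemma gdist_le_of_partKey_eq (hcenter : ∀ x, gdist G w x (center x) ≤ δ) {u v : V}
    (huv : partKey ℓ center u = partKey ℓ center v) : gdist G w u v ≤ δ + δ := by
  have hc : center u = center v := (Prod.ext_iff.1 (toLex.injective huv)).2
  calc gdist G w u v ≤ gdist G w u (center u) + gdist G w (center u) v := gdist_triangle _ _ _
    _ = gdist G w u (center u) + gdist G w v (center v) := by rw [hc, gdist_comm (center v)]
    _ ≤ δ + δ := add_le_add (hcenter u) (hcenter v)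

variable [LinearOrder V]

lemma leader_le_of_partKey_le {x y : V} (hxy : partKey ℓ center x ≤ partKey ℓ center y) :
    ℓ x ≤ ℓ y :=
  Prod.Lex.monotone_fst _ _ hxy

variable [Finite V]

lemma IsClustering.exists_leader_eq_of_wReach (hℓ : IsClustering G w δ ℓ) (hr : 0 < r)
    {x : V} {Y : Set V} (hY : Y ∈ (Setoid.ker (partKey ℓ center)).classes)
    (hXY : WReach G w (Setoid.ker (partKey ℓ center)).classes (fiberLE (partKey ℓ center)) r
      {u | partKey ℓ center u = partKey ℓ center x} Y) :
    ∃ b ∈ Y, ℓ b ∈ insert (ℓ x) (weakLeaders G w ℓ (ℓ x) (ENNReal.ofReal r)) := by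
  obtain ⟨a, ha, b, hb, p, hp, hpr⟩ := exists_walk_of_setDistOn_le hXY ENNReal.ofReal_ne_top
  have hax : ℓ a = ℓ x := (Prod.ext_iff.1 (toLex.injective ha)).1
  have hreach : LeaderReach G w ℓ (ENNReal.ofReal r) a (ℓ b) :=
    ⟨ENNReal.ofReal_pos.2 hr, b, rfl, p,
      fun u hu => leader_le_of_partKey_le (le_of_mem_sUnion_fiberLE hY hb (hp u hu)), hpr⟩
  rw [← hax]
  exact ⟨b, hb, hreach.le_leader.eq_or_lt.imp id fun hlt =>
    ⟨hlt, a, hℓ.mem_upperComponent a, le_rfl, hreach⟩⟩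

lemma IsClustering.wcol_le_mul (hℓ : IsClustering G w δ ℓ)
    (hmem : ∀ x, center x ∈ insert (ℓ x) (lowerBoundary G (ℓ x))) (hr : 0 < r)
    (hk : ∀ v, (insert v (lowerBoundary G v)).ncard ≤ k)
    (hm : ∀ v, 1 + (weakLeaders G w ℓ v (ENNReal.ofReal r)).ncard ≤ m) :
    wcol G w (Setoid.ker (partKey ℓ center)).classes (fiberLE (partKey ℓ center)) r ≤ k * m := by
  refine wcol_le fun X hX => ?_
  obtain ⟨x, rfl⟩ := hX
  let L := insert (ℓ x) (weakLeaders G w ℓ (ℓ x) (ENNReal.ofReal r))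
  let part (b c : V) : Set V := {u | partKey ℓ center u = toLex (b, c)}
  have hsub : {Y | Y ∈ (Setoid.ker (partKey ℓ center)).classes ∧
      WReach G w (Setoid.ker (partKey ℓ center)).classes (fiberLE (partKey ℓ center)) r
        {u | partKey ℓ center u = partKey ℓ center x} Y} ⊆
      ⋃ b ∈ L, part b '' insert b (lowerBoundary G b) := by
    rintro Y ⟨hY, hXY⟩
    obtain ⟨b, hb, hbL⟩ := hℓ.exists_leader_eq_of_wReach hr hY hXY
    exact Set.mem_biUnion hbL ⟨center b, hmem b, (eq_fiber_of_mem_classes hY hb).symm⟩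
  have hL : L.ncard ≤ m := (Set.ncard_insert_le _ _).trans ((add_comm _ _).trans_le (hm _))
  calc _ ≤ (⋃ b ∈ L, part b '' insert b (lowerBoundary G b)).ncard := Set.ncard_le_ncard hsub
    _ ≤ L.ncard * k := ncard_biUnion_le (Set.toFinite _) fun b _ =>
        (Set.ncard_image_le (Set.toFinite _)).trans (hk b)
    _ ≤ k * m := (mul_comm _ _).trans_le (Nat.mul_le_mul_left k hL)

lemma IsClustering.one_add_ncard_weakLeaders_le_min (hℓ : IsClustering G w δ ℓ) {v : V} {n : ℕ}
    {r : ℝ≥0∞} (hk : ∀ v, (insert v (lowerBoundary G v)).ncard ≤ k) (hr : r ≤ n * δ) :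
    1 + (weakLeaders G w ℓ v r).ncard ≤ min (2 ^ k * (k + n).choose k) ((k + 1) ^ (2 * n)) := by
  have hboundary (v : V) : (boundaryLeaders G ℓ v).ncard ≤ k :=
    (Set.ncard_image_le (Set.toFinite _)).trans
      ((Set.ncard_le_ncard (Set.subset_insert _ _)).trans (hk v))
  refine le_min ?_ (hℓ.ncard_weakLeaders_le_pow hboundary hr)
  simpa using hℓ.ncard_weakLeaders_inter_le_choose (I := Set.univ) isUpperSet_univ
    (fun v _ => by simpa using hboundary v) hr

end ClusterPartition

theorem stmt_9_general [Finite V] (G : SimpleGraph V) (w : Sym2 V → ℝ≥0∞) {ρ : ℝ} (hρ : 0 < ρ)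
    {k : ℕ} {ι : Type} {T : SimpleGraph ι} {bag : ι → Set V} (htd : IsTreeDecompOf G T bag)
    (hbag : ∀ t, (bag t).ncard ≤ k) :
    ∃ (P : Set (Set V)) (le : Set V → Set V → Prop),
      Setoid.IsPartition P ∧
      (∀ X ∈ P, ∀ u ∈ X, ∀ v ∈ X, gdist G w u v ≤ ENNReal.ofReal ρ) ∧
      IsLinearOrderOn P le ∧
      ∀ r : ℝ, 0 < r →
        wcol G w P le r ≤
          min (k * 2 ^ k * (k + ⌈2 * r / ρ⌉₊).choose k) (k * (k + 1) ^ (2 * ⌈2 * r / ρ⌉₊)) := by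
  obtain ⟨order, hk⟩ := exists_linearOrder_ncard_insert_lowerBoundary_le htd hbag
  obtain ⟨ℓ, hℓ⟩ := exists_isClustering G w (ENNReal.ofReal (ρ / 2))
  choose center hmem hnear using hℓ.near
  refine ⟨(Setoid.ker (partKey ℓ center)).classes, fiberLE (partKey ℓ center),
    Setoid.isPartition_classes _, fun X hX u hu v hv => ?_, isLinearOrderOn_fiberLE,
    fun r hr => ?_⟩
  · rw [eq_fiber_of_mem_classes hX hv] at hu
    refine (gdist_le_of_partKey_eq hnear hu).trans_eq ?_
    rw [← ENNReal.ofReal_add (by positivity) (by positivity), add_halves]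
  · have hcount (v : V) := hℓ.one_add_ncard_weakLeaders_le_min (v := v) hk
      (ofReal_le_ceil_mul_ofReal hρ r)
    simpa only [mul_min, mul_assoc] using hℓ.wcol_le_mul hmem hr hk hcount

theorem stmt_9 {V : Type} [Fintype V] (G : SimpleGraph V) (w : Sym2 V → ℝ≥0∞)
    (ρ : ℝ) (hρ : 0 < ρ) (k : ℕ)
    {ι : Type} (T : SimpleGraph ι) (bag : ι → Set V)
    (htd : IsTreeDecompOf G T bag) (hbag : ∀ t, (bag t).ncard ≤ k) :
    ∃ (P : Set (Set V)) (le : Set V → Set V → Prop),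
      Setoid.IsPartition P ∧
      (∀ X ∈ P, ∀ u ∈ X, ∀ v ∈ X, gdist G w u v ≤ ENNReal.ofReal ρ) ∧
      IsLinearOrderOn P le ∧
      ∀ r : ℝ, ρ < r →
        wcol G w P le r ≤
          min (k * 2 ^ k * (k + ⌈2 * r / ρ⌉₊).choose k)
            ((2 * ⌈2 * r / ρ⌉₊ + k + 1) ^ (3 * ⌈2 * r / ρ⌉₊ + 4)) := by
  obtain ⟨P, le, hP, hdiam, hle, hwcol⟩ := stmt_9_general G w hρ htd hbag
  exact ⟨P, le, hP, hdiam, hle, fun r hr =>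
    (hwcol r (hρ.trans hr)).trans (min_le_min_left _ (mul_succ_pow_le_pow k _))⟩

end ScatterDim
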